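/- For all subsets T₁, T₂ ⊆ 𝒦, the set function b⁻(T) = I(V_T; Z | Q) satisfies the submodular-type inequality b⁻(T₁) + b⁻(T₂) ≤ b⁻(T₁ ∩ T₂) + b⁻(T₁ ∪ T₂), i.e., I(V_{T₁}; Z | Q) + I(V_{T₂}; Z | Q) ≤ I(V_{T₁∩T₂}; Z | Q) + I(V_{T₁∪T₂}; Z | Q). -/

import Mathlib

open scoped Classical

/-- Probability that the random variable `X` (on the finite sample space `Ω` with
probability mass function `p`) takes the value `a`. -/
noncomputable def prob {Ω : Type} [Fintype Ω] (p : Ω → ℝ) {α : Type} (X : Ω → α)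
    (a : α) : ℝ :=
  ∑ ω : Ω, if X ω = a then p ω else 0

/-- Shannon entropy (base 2) of the random variable `X`, with the convention
`0 · log 0 = 0`. -/
noncomputable def ent {Ω : Type} [Fintype Ω] (p : Ω → ℝ) {α : Type} [Fintype α]
    (X : Ω → α) : ℝ :=
  -∑ a : α, prob p X a * Real.logb 2 (prob p X a)

/-- Conditional mutual information `I(X; Y | Z) = H(X,Z) + H(Y,Z) - H(X,Y,Z) - H(Z)`. -/
noncomputable def condMI {Ω : Type} [Fintype Ω] (p : Ω → ℝ) {α β γ : Type}
    [Fintype α] [Fintype β] [Fintype γ] (X : Ω → α) (Y : Ω → β) (Z : Ω → γ) : ℝ :=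
  ent p (fun ω => (X ω, Z ω)) + ent p (fun ω => (Y ω, Z ω))
    - ent p (fun ω => (X ω, Y ω, Z ω)) - ent p Z

/-- The tuple-valued random variable `V_J = (V_j)_{j ∈ J}`. -/
def VJ {Ω : Type} {K : ℕ} {α : Fin K → Type} (V : (i : Fin K) → Ω → α i)
    (J : Finset (Fin K)) : Ω → ((j : J) → α j) :=
  fun ω j => V j ω

/-- `V_1, …, V_K` are mutually conditionally independent given `Q`:
`P(V_1 = v_1, …, V_K = v_K, Q = q) · P(Q = q)^(K-1) = ∏ i, P(V_i = v_i, Q = q)`. -/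
def CondIndep {Ω : Type} [Fintype Ω] {𝒬 : Type} {K : ℕ} {α : Fin K → Type}
    (p : Ω → ℝ) (Q : Ω → 𝒬) (V : (i : Fin K) → Ω → α i) : Prop :=
  ∀ (q : 𝒬) (v : (i : Fin K) → α i),
    prob p (fun ω => ((fun i => V i ω : (i : Fin K) → α i), Q ω)) (v, q)
        * (prob p Q q) ^ (K - 1)
      = ∏ i : Fin K, prob p (fun ω => (V i ω, Q ω)) (v i, q)

section Entropy

variable {Ω α β γ : Type} [Fintype Ω] [Fintype α] [Fintype β] [Fintype γ] {p : Ω → ℝ}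

lemma prob_nonneg (hp : ∀ ω, 0 ≤ p ω) {δ : Type} (X : Ω → δ) (a : δ) : 0 ≤ prob p X a :=
  Finset.sum_nonneg fun ω _ => by split_ifs <;> simp [hp]

lemma prob_apply_pos (hp : ∀ ω, 0 ≤ p ω) {δ : Type} (X : Ω → δ) {ω : Ω} (h : 0 < p ω) :
    0 < prob p X (X ω) :=
  Finset.sum_pos' (fun ω' _ => by split_ifs <;> simp [hp]) ⟨ω, Finset.mem_univ _, by simpa using h⟩

/-- The law of the unconscious statistician. -/
lemma sum_prob_mul (X : Ω → α) (f : α → ℝ) :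
    ∑ a, prob p X a * f a = ∑ ω, p ω * f (X ω) := by
  simp only [prob, Finset.sum_mul, ite_mul, zero_mul]
  rw [Finset.sum_comm]
  simp

lemma sum_prob (X : Ω → α) : ∑ a, prob p X a = ∑ ω, p ω := by
  simpa using sum_prob_mul (p := p) X fun _ => 1

lemma sum_prob_prodMk {δ : Type} (X : Ω → α) (W : Ω → δ) (w : δ) :
    ∑ x, prob p (fun ω => (X ω, W ω)) (x, w) = prob p W w := by
  simp only [prob, Prod.mk.injEq, ite_and]
  rw [Finset.sum_comm]
  simp

lemma ent_eq_sum (X : Ω → α) :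
    ent p X = -∑ ω, p ω * Real.logb 2 (prob p X (X ω)) := by
  rw [ent, sum_prob_mul X fun a => Real.logb 2 (prob p X a)]

/-- Entropy depends only on the partition of the sample space induced by the variable. -/
lemma ent_congr {X : Ω → α} {Y : Ω → β} (h : ∀ ω ω', X ω = X ω' ↔ Y ω = Y ω') :
    ent p X = ent p Y := by
  simp only [ent_eq_sum, prob, h]

/-- Strong subadditivity of Shannon entropy. -/
lemma ent_submodular (hp : ∀ ω, 0 ≤ p ω) (hp1 : ∑ ω, p ω = 1)
    (X : Ω → α) (Y : Ω → β) (W : Ω → γ) :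
    ent p (fun ω => (X ω, Y ω, W ω)) + ent p W
      ≤ ent p (fun ω => (X ω, W ω)) + ent p (fun ω => (Y ω, W ω)) := by
  let A : α × γ → ℝ := prob p fun ω => (X ω, W ω)
  let B : β × γ → ℝ := prob p fun ω => (Y ω, W ω)
  let C : α × β × γ → ℝ := prob p fun ω => (X ω, Y ω, W ω)
  let D : γ → ℝ := prob p W
  let r : α × β × γ → ℝ := fun a => A (a.1, a.2.2) * B (a.2.1, a.2.2) / (C a * D a.2.2)
  have hA : ∀ a, 0 ≤ A a := prob_nonneg hp _
  have hB : ∀ a, 0 ≤ B a := prob_nonneg hp _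
  have hC : ∀ a, 0 ≤ C a := prob_nonneg hp _
  have hD : ∀ a, 0 ≤ D a := prob_nonneg hp _
  have hr : ∑ ω, p ω * r (X ω, Y ω, W ω) ≤ 1 := by
    rw [← sum_prob_mul (fun ω => (X ω, Y ω, W ω)) r]
    calc ∑ a, C a * r a
        ≤ ∑ a : α × β × γ, A (a.1, a.2.2) * B (a.2.1, a.2.2) / D a.2.2 := by
          refine Finset.sum_le_sum fun a _ => ?_
          rcases (hC a).eq_or_lt with h | h
          · rw [← h, zero_mul]
            exact div_nonneg (mul_nonneg (hA _) (hB _)) (hD _)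
          · apply le_of_eq
            simp only [r]
            rw [← mul_div_assoc, mul_div_mul_left _ _ h.ne']
      _ = ∑ w, D w := by
          simp only [Fintype.sum_prod_type]
          rw [Finset.sum_congr rfl fun x _ => Finset.sum_comm, Finset.sum_comm]
          refine Finset.sum_congr rfl fun w _ => ?_
          simp only [← Finset.sum_div, ← Finset.mul_sum, ← Finset.sum_mul]
          simp only [A, B, D, sum_prob_prodMk]
          exact mul_self_div_self _
      _ = 1 := by rw [← hp1]; exact sum_prob W
  have key : ∑ ω, p ω * (Real.logb 2 (A (X ω, W ω)) + Real.logb 2 (B (Y ω, W ω))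
      - Real.logb 2 (C (X ω, Y ω, W ω)) - Real.logb 2 (D (W ω)))
      ≤ ∑ ω, (p ω * r (X ω, Y ω, W ω) - p ω) / Real.log 2 := by
    refine Finset.sum_le_sum fun ω _ => ?_
    rcases (hp ω).eq_or_lt with h | h
    · simp [← h]
    have a0 : 0 < A (X ω, W ω) := prob_apply_pos hp (fun ω => (X ω, W ω)) h
    have b0 : 0 < B (Y ω, W ω) := prob_apply_pos hp (fun ω => (Y ω, W ω)) h
    have c0 : 0 < C (X ω, Y ω, W ω) := prob_apply_pos hp (fun ω => (X ω, Y ω, W ω)) h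
    have d0 : 0 < D (W ω) := prob_apply_pos hp W h
    have hlog : Real.logb 2 (A (X ω, W ω)) + Real.logb 2 (B (Y ω, W ω))
        - Real.logb 2 (C (X ω, Y ω, W ω)) - Real.logb 2 (D (W ω))
        = Real.log (r (X ω, Y ω, W ω)) / Real.log 2 := by
      simp only [r, Real.logb]
      rw [Real.log_div (by positivity) (by positivity), Real.log_mul a0.ne' b0.ne',
        Real.log_mul c0.ne' d0.ne']
      ring
    have hrpos : 0 < r (X ω, Y ω, W ω) := by simp only [r]; positivity
    rw [hlog, ← mul_div_assoc, ← mul_sub_one]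
    have := Real.log_pos one_lt_two
    gcongr
    exact Real.log_le_sub_one_of_pos hrpos
  rw [← Finset.sum_div, Finset.sum_sub_distrib, hp1] at key
  have hle := key.trans
    (div_nonpos_of_nonpos_of_nonneg (sub_nonpos.2 hr) (Real.log_pos one_lt_two).le)
  simp only [mul_add, mul_sub, Finset.sum_add_distrib, Finset.sum_sub_distrib] at hle
  simp only [ent_eq_sum]
  simp only [A, B, C, D] at hle
  linarith

end Entropy

section Family

lemma VJ_eq_iff {Ω : Type} {K : ℕ} {α : Fin K → Type} {V : (i : Fin K) → Ω → α i}
    (J : Finset (Fin K)) (ω ω' : Ω) :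
    VJ V J ω = VJ V J ω' ↔ ∀ j ∈ J, V j ω = V j ω' := by
  simp [VJ, funext_iff]

variable {Ω 𝒬 : Type} [Fintype Ω] [Fintype 𝒬] {K : ℕ} {α : Fin K → Type}
  [∀ i, Fintype (α i)] {p : Ω → ℝ} {Q : Ω → 𝒬} {V : (i : Fin K) → Ω → α i}

lemma ent_VJ_submodular (hp : ∀ ω, 0 ≤ p ω) (hp1 : ∑ ω, p ω = 1) (S T : Finset (Fin K)) :
    ent p (fun ω => (VJ V (S ∩ T) ω, Q ω)) + ent p (fun ω => (VJ V (S ∪ T) ω, Q ω))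
      ≤ ent p (fun ω => (VJ V S ω, Q ω)) + ent p (fun ω => (VJ V T ω, Q ω)) := by
  have h := ent_submodular hp hp1 (VJ V S) (VJ V T) fun ω => (VJ V (S ∩ T) ω, Q ω)
  rw [ent_congr (Y := fun ω => (VJ V (S ∪ T) ω, Q ω)),
    ent_congr (X := fun ω => (VJ V S ω, VJ V (S ∩ T) ω, Q ω)) (Y := fun ω => (VJ V S ω, Q ω)),
    ent_congr (X := fun ω => (VJ V T ω, VJ V (S ∩ T) ω, Q ω)) (Y := fun ω => (VJ V T ω, Q ω))] at h
  · linarith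
  all_goals
    intro ω ω'
    simp only [Prod.mk.injEq, VJ_eq_iff, Finset.mem_inter, Finset.mem_union]
    grind

lemma ent_VJ_empty : ent p (fun ω => (VJ V ∅ ω, Q ω)) = ent p Q :=
  ent_congr fun ω ω' => by simp [VJ_eq_iff]

lemma ent_VJ_union_le (hp : ∀ ω, 0 ≤ p ω) (hp1 : ∑ ω, p ω = 1) (S T : Finset (Fin K))
    (hST : Disjoint S T) :
    ent p (fun ω => (VJ V (S ∪ T) ω, Q ω))
      ≤ ent p (fun ω => (VJ V S ω, Q ω))
        + ∑ i ∈ T, (ent p (fun ω => (V i ω, Q ω)) - ent p Q) := by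
  induction T using Finset.induction_on with
  | empty => rw [Finset.union_empty, Finset.sum_empty, add_zero]
  | insert i T hi ih =>
    rw [Finset.disjoint_insert_right] at hST
    have h := ent_VJ_submodular (Q := Q) (V := V) hp hp1 (S ∪ T) {i}
    have hdisj : (S ∪ T) ∩ {i} = ∅ := by
      grind
    have hunion : S ∪ T ∪ {i} = S ∪ insert i T := by
      grind
    have hsingle : ent p (fun ω => (VJ V {i} ω, Q ω)) = ent p (fun ω => (V i ω, Q ω)) :=
      ent_congr fun ω ω' => by simp [VJ_eq_iff]
    rw [hdisj, hunion, ent_VJ_empty, hsingle] at h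
    rw [Finset.sum_insert hi]
    linarith [ih hST.2]

lemma CondIndep.ent_VJ_univ (hp : ∀ ω, 0 ≤ p ω) (hind : CondIndep p Q V) :
    ent p (fun ω => (VJ V Finset.univ ω, Q ω))
      = ent p Q + ∑ i, (ent p (fun ω => (V i ω, Q ω)) - ent p Q) := by
  rcases K.eq_zero_or_pos with rfl | hK
  · simpa using ent_congr fun ω ω' => by simp [VJ_eq_iff]
  have hfull : ent p (fun ω => (VJ V Finset.univ ω, Q ω))
      = ent p (fun ω => ((fun i => V i ω : (i : Fin K) → α i), Q ω)) :=
    ent_congr fun ω ω' => by simp [VJ, funext_iff]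
  have hpt : ∀ ω, p ω * Real.logb 2 (prob p (fun ω => ((fun i => V i ω : (i : Fin K) → α i), Q ω))
        (fun i => V i ω, Q ω)) + ((K : ℝ) - 1) * (p ω * Real.logb 2 (prob p Q (Q ω)))
      = ∑ i, p ω * Real.logb 2 (prob p (fun ω => (V i ω, Q ω)) (V i ω, Q ω)) := by
    intro ω
    rcases (hp ω).eq_or_lt with h | h
    · simp [← h]
    have h1 := prob_apply_pos hp (fun ω => ((fun i => V i ω : (i : Fin K) → α i), Q ω)) h
    have h2 := prob_apply_pos hp Q h
    have h3 := congrArg (Real.logb 2) (hind (Q ω) fun i => V i ω)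
    rw [Real.logb_mul h1.ne' (pow_pos h2 _).ne', Real.logb_pow,
      Real.logb_prod _ _ fun i _ => (prob_apply_pos hp (fun ω => (V i ω, Q ω)) h).ne',
      Nat.cast_pred hK] at h3
    rw [← Finset.mul_sum, ← h3]
    ring
  have hsum := Finset.sum_congr (rfl : (Finset.univ : Finset Ω) = _) fun ω _ => hpt ω
  rw [Finset.sum_add_distrib, ← Finset.mul_sum, Finset.sum_comm] at hsum
  rw [hfull, Finset.sum_sub_distrib]
  simp only [ent_eq_sum, Finset.sum_neg_distrib, Finset.sum_const, Finset.card_univ,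
    Fintype.card_fin, nsmul_eq_mul]
  linarith

lemma CondIndep.ent_VJ (hp : ∀ ω, 0 ≤ p ω) (hp1 : ∑ ω, p ω = 1) (hind : CondIndep p Q V)
    (T : Finset (Fin K)) :
    ent p (fun ω => (VJ V T ω, Q ω))
      = ent p Q + ∑ i ∈ T, (ent p (fun ω => (V i ω, Q ω)) - ent p Q) := by
  have hupper := ent_VJ_union_le (Q := Q) (V := V) hp hp1 ∅ T (Finset.disjoint_empty_left T)
  have hlower := ent_VJ_union_le (Q := Q) (V := V) hp hp1 T Tᶜ disjoint_compl_right
  rw [Finset.empty_union, ent_VJ_empty] at hupper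
  rw [Finset.union_compl, hind.ent_VJ_univ hp, ← Finset.sum_add_sum_compl T] at hlower
  linarith

end Family

/-- The set function `b⁻(T) = I(V_T; Z | Q)` is submodular:
`b⁻(T₁) + b⁻(T₂) ≤ b⁻(T₁ ∩ T₂) + b⁻(T₁ ∪ T₂)`. -/
theorem bminus_submodular {Ω 𝒬 𝒴 𝒵 : Type} [Fintype Ω] [Fintype 𝒬] [Fintype 𝒴]
    [Fintype 𝒵] {K : ℕ} {α : Fin K → Type} [∀ i, Fintype (α i)]
    (p : Ω → ℝ) (hp : ∀ ω, 0 ≤ p ω) (hp1 : ∑ ω : Ω, p ω = 1)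
    (Q : Ω → 𝒬) (Y : Ω → 𝒴) (Z : Ω → 𝒵) (V : (i : Fin K) → Ω → α i)
    (hind : CondIndep p Q V) (T₁ T₂ : Finset (Fin K)) :
    condMI p (VJ V T₁) Z Q + condMI p (VJ V T₂) Z Q
      ≤ condMI p (VJ V (T₁ ∩ T₂)) Z Q + condMI p (VJ V (T₁ ∪ T₂)) Z Q := by
  have hZ := ent_VJ_submodular (Q := fun ω => (Z ω, Q ω)) (V := V) hp hp1 T₁ T₂
  have hsum := Finset.sum_union_inter (s₁ := T₁) (s₂ := T₂)
    (f := fun i => ent p (fun ω => (V i ω, Q ω)) - ent p Q)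
  simp only [condMI, hind.ent_VJ hp hp1]
  linarith
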